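/- Subextensivity: for every bipartite non-signaling device P over finite sets A, B, X, Y, the squashed non-locality satisfies N_sq(P) <= log2(min(|A|, |B|)). -/

import Mathlib

/-- Shannon entropy (base-2) of a finitely supported real-valued distribution. -/
noncomputable def shannonEnt {α : Type} [Fintype α] (p : α → ℝ) : ℝ :=
  -∑ a, p a * Real.logb 2 (p a)

/-- Shannon mutual information (base-2) of a joint distribution on `α × β`. -/
noncomputable def mutInfo {α β : Type} [Fintype α] [Fintype β] (R : α → β → ℝ) : ℝ :=
  shannonEnt (fun a => ∑ b, R a b) + shannonEnt (fun b => ∑ a, R a b) -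
    shannonEnt (fun p : α × β => R p.1 p.2)

/-- A bipartite non-signaling device over finite output sets `A`, `B` and input
sets `X`, `Y`. -/
def IsDevice {A B X Y : Type} [Fintype A] [Fintype B] (P : A → B → X → Y → ℝ) : Prop :=
  (∀ a b x y, 0 ≤ P a b x y) ∧
  (∀ x y, ∑ a, ∑ b, P a b x y = 1) ∧
  (∀ a x y y', ∑ b, P a b x y = ∑ b, P a b x y') ∧
  (∀ b y x x', ∑ a, P a b x y = ∑ a, P a b x' y)

/-- The set of values `∑_e p_e · I(A:B)_{P_e(·,·|x,y)}` over all (finite) ensembles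
`{(p_e, P_e)}` of the device `P` into non-signaling devices. -/
def NsqSet {A B X Y : Type} [Fintype A] [Fintype B]
    (P : A → B → X → Y → ℝ) (x : X) (y : Y) : Set ℝ :=
  { r | ∃ (n : ℕ) (p : Fin n → ℝ) (Pe : Fin n → A → B → X → Y → ℝ),
      (∀ i, 0 ≤ p i) ∧ (∑ i, p i = 1) ∧ (∀ i, IsDevice (Pe i)) ∧
      (∀ a b x' y', ∑ i, p i * Pe i a b x' y' = P a b x' y') ∧
      r = ∑ i, p i * mutInfo (fun a b => Pe i a b x y) }

/-- The squashed non-locality of a bipartite device: the maximum over inputs `(x,y)` of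
the infimum over ensembles of the averaged mutual information at fixed inputs. -/
noncomputable def Nsq {A B X Y : Type} [Fintype A] [Fintype B] [Fintype X] [Fintype Y]
    [Nonempty X] [Nonempty Y] (P : A → B → X → Y → ℝ) : ℝ :=
  Finset.univ.sup' Finset.univ_nonempty (fun xy : X × Y => sInf (NsqSet P xy.1 xy.2))

/-- A local device, i.e. one admitting a local hidden variable model. -/
def IsLocalDevice {A B X Y : Type} [Fintype A] [Fintype B] (P : A → B → X → Y → ℝ) : Prop :=
  ∃ (n : ℕ) (mu : Fin n → ℝ) (LA : A → X → Fin n → ℝ) (LB : B → Y → Fin n → ℝ),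
    (∀ i, 0 ≤ mu i) ∧ (∑ i, mu i = 1) ∧
    (∀ a x i, 0 ≤ LA a x i) ∧ (∀ x i, ∑ a, LA a x i = 1) ∧
    (∀ b y i, 0 ≤ LB b y i) ∧ (∀ y i, ∑ b, LB b y i = 1) ∧
    (∀ a b x y, P a b x y = ∑ i, mu i * LA a x i * LB b y i)

/-!
The one-device ensemble `{(1, P)}` bounds the infimum at `(x, y)` by the mutual information of
`P(·,·|x,y)`. Mutual information is at most either marginal entropy, since the joint entropy
dominates both marginal entropies, and a marginal on a `k`-element set has entropy at most
`log₂ k`. Since `sInf` of a set of reals that is not bounded below is `0`, the first step also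
requires `0 ≤ I(A:B)`. This and the bound `log₂ k` are instances of Gibbs' inequality, for the
product of the marginals and for the uniform distribution respectively.
-/

lemma mul_log_sub_mul_log_le_sub {x y : ℝ} (hx : 0 ≤ x) (hy : 0 ≤ y) (hxy : y = 0 → x = 0) :
    x * Real.log y - x * Real.log x ≤ y - x := by
  rcases hx.eq_or_lt with rfl | hx_pos
  · simpa using hy
  have hy_pos : 0 < y := hy.lt_of_ne' fun h => hx_pos.ne' (hxy h)
  calc x * Real.log y - x * Real.log x = x * Real.log (y / x) := by
        rw [Real.log_div hy_pos.ne' hx_pos.ne', mul_sub]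
    _ ≤ x * (y / x - 1) := by gcongr; exact Real.log_le_sub_one_of_pos (by positivity)
    _ = y - x := by field_simp

/-- The cross entropy (base-2) of `q` relative to `p`, which bounds the entropy of `p` in Gibbs'
inequality. Outcomes with `q a = 0 < p a` contribute `0` instead of `∞`, so it is meaningful only
when `q a = 0` forces `p a = 0`. -/
noncomputable def crossEnt {α : Type} [Fintype α] (p q : α → ℝ) : ℝ :=
  -∑ a, p a * Real.logb 2 (q a)

section Entropy

variable {α : Type} [Fintype α] {p q : α → ℝ}

theorem shannonEnt_le_crossEnt (hp : ∀ a, 0 ≤ p a) (hq : ∀ a, 0 ≤ q a)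
    (hpq : ∀ a, q a = 0 → p a = 0) (hsum : ∑ a, q a ≤ ∑ a, p a) :
    shannonEnt p ≤ crossEnt p q := by
  have hlog : ∑ a, p a * Real.log (q a) ≤ ∑ a, p a * Real.log (p a) := by
    rw [← sub_nonpos, ← Finset.sum_sub_distrib]
    calc ∑ a, (p a * Real.log (q a) - p a * Real.log (p a))
        ≤ ∑ a, (q a - p a) := Finset.sum_le_sum fun a _ =>
          mul_log_sub_mul_log_le_sub (hp a) (hq a) (hpq a)
      _ ≤ 0 := by rw [Finset.sum_sub_distrib]; exact sub_nonpos.2 hsum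
  simp only [shannonEnt, crossEnt, Real.logb, ← mul_div_assoc, ← Finset.sum_div]
  gcongr

lemma shannonEnt_le_logb_card (hp : ∀ a, 0 ≤ p a) (hp_sum : ∑ a, p a = 1) :
    shannonEnt p ≤ Real.logb 2 (Fintype.card α) := by
  have : Nonempty α := by
    by_contra! h
    simp at hp_sum
  have hcard : (Fintype.card α : ℝ) ≠ 0 := Nat.cast_ne_zero.2 Fintype.card_ne_zero
  calc shannonEnt p ≤ crossEnt p fun _ => (Fintype.card α : ℝ)⁻¹ :=
        shannonEnt_le_crossEnt hp (fun _ => by positivity)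
          (fun _ h => absurd h (inv_ne_zero hcard)) (by simp [hp_sum, hcard])
    _ = Real.logb 2 (Fintype.card α) := by
        simp [crossEnt, ← Finset.sum_mul, hp_sum, Real.logb_inv]

end Entropy

section MutualInformation

variable {α β : Type} [Fintype α] [Fintype β] {R : α → β → ℝ}

lemma shannonEnt_snd_le_shannonEnt_joint (hR : ∀ a b, 0 ≤ R a b) :
    shannonEnt (fun b => ∑ a, R a b) ≤ shannonEnt (fun ab : α × β => R ab.1 ab.2) := by
  simp only [shannonEnt, Fintype.sum_prod_type_right, Finset.sum_mul]
  refine neg_le_neg <| Finset.sum_le_sum fun b _ => Finset.sum_le_sum fun a _ => ?_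
  rcases (hR a b).eq_or_lt with h | h
  · simp [← h]
  · gcongr
    · exact one_lt_two
    · exact Finset.single_le_sum (fun a _ => hR a b) (Finset.mem_univ a)

lemma mutInfo_le_shannonEnt_fst (hR : ∀ a b, 0 ≤ R a b) :
    mutInfo R ≤ shannonEnt fun a => ∑ b, R a b := by
  have := shannonEnt_snd_le_shannonEnt_joint hR
  rw [mutInfo]
  linarith

lemma mutInfo_swap (R : α → β → ℝ) : mutInfo (fun b a => R a b) = mutInfo R := by
  simp only [mutInfo, shannonEnt, Fintype.sum_prod_type]
  rw [Finset.sum_comm (γ := β)]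
  ring

lemma mutInfo_le_logb_card_fst (hR : ∀ a b, 0 ≤ R a b) (hR_sum : ∑ a, ∑ b, R a b = 1) :
    mutInfo R ≤ Real.logb 2 (Fintype.card α) :=
  (mutInfo_le_shannonEnt_fst hR).trans <|
    shannonEnt_le_logb_card (fun a => Finset.sum_nonneg fun b _ => hR a b) hR_sum

theorem mutInfo_le_logb_min_card (hR : ∀ a b, 0 ≤ R a b) (hR_sum : ∑ a, ∑ b, R a b = 1) :
    mutInfo R ≤ Real.logb 2 ((min (Fintype.card α) (Fintype.card β) : ℕ) : ℝ) := by
  rcases min_choice (Fintype.card α) (Fintype.card β) with h | h <;> rw [h]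
  · exact mutInfo_le_logb_card_fst hR hR_sum
  · rw [← mutInfo_swap]
    exact mutInfo_le_logb_card_fst (fun b a => hR a b) (Finset.sum_comm.trans hR_sum)

lemma crossEnt_mul_marginals (hR : ∀ a b, 0 ≤ R a b) :
    crossEnt (fun ab : α × β => R ab.1 ab.2) (fun ab => (∑ b, R ab.1 b) * ∑ a, R a ab.2) =
      shannonEnt (fun a => ∑ b, R a b) + shannonEnt (fun b => ∑ a, R a b) := by
  have hlog_mul (a : α) (b : β) : R a b * Real.logb 2 ((∑ b', R a b') * ∑ a', R a' b) =
      R a b * Real.logb 2 (∑ b', R a b') + R a b * Real.logb 2 (∑ a', R a' b) := by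
    rcases (hR a b).eq_or_lt with h | h
    · simp [← h]
    · have hrow : 0 < ∑ b', R a b' :=
        Finset.sum_pos' (fun b' _ => hR a b') ⟨b, Finset.mem_univ b, h⟩
      have hcol : 0 < ∑ a', R a' b :=
        Finset.sum_pos' (fun a' _ => hR a' b) ⟨a, Finset.mem_univ a, h⟩
      rw [Real.logb_mul hrow.ne' hcol.ne', mul_add]
  simp only [crossEnt, shannonEnt, Fintype.sum_prod_type, hlog_mul, Finset.sum_add_distrib, neg_add]
  simp only [Finset.sum_mul]
  rw [Finset.sum_comm (f := fun a b => R a b * Real.logb 2 (∑ a', R a' b))]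

theorem mutInfo_nonneg (hR : ∀ a b, 0 ≤ R a b) (hR_sum : ∑ a, ∑ b, R a b = 1) :
    0 ≤ mutInfo R := by
  rw [mutInfo, ← crossEnt_mul_marginals hR, sub_nonneg]
  refine shannonEnt_le_crossEnt (fun ab => hR ab.1 ab.2) (fun ab => ?_) (fun ab h => ?_) ?_
  · exact mul_nonneg (Finset.sum_nonneg fun b _ => hR ab.1 b)
      (Finset.sum_nonneg fun a _ => hR a ab.2)
  · rcases mul_eq_zero.1 h with hrow | hcol
    · exact (Finset.sum_eq_zero_iff_of_nonneg fun b _ => hR ab.1 b).1 hrow ab.2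
        (Finset.mem_univ _)
    · exact (Finset.sum_eq_zero_iff_of_nonneg fun a _ => hR a ab.2).1 hcol ab.1
        (Finset.mem_univ _)
  · have hcol_sum : ∑ b, ∑ a, R a b = 1 := Finset.sum_comm.trans hR_sum
    simp only [Fintype.sum_prod_type, ← Finset.mul_sum, hcol_sum, mul_one, le_refl]

end MutualInformation

section SquashedNonlocality

variable {A B X Y : Type} [Fintype A] [Fintype B] {P : A → B → X → Y → ℝ}

lemma IsDevice.mutInfo_nonneg (hP : IsDevice P) (x : X) (y : Y) :
    0 ≤ mutInfo fun a b => P a b x y :=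
  _root_.mutInfo_nonneg (fun a b => hP.1 a b x y) (hP.2.1 x y)

lemma IsDevice.mutInfo_le_logb_min_card (hP : IsDevice P) (x : X) (y : Y) :
    mutInfo (fun a b => P a b x y) ≤
      Real.logb 2 ((min (Fintype.card A) (Fintype.card B) : ℕ) : ℝ) :=
  _root_.mutInfo_le_logb_min_card (fun a b => hP.1 a b x y) (hP.2.1 x y)

lemma bddBelow_NsqSet (P : A → B → X → Y → ℝ) (x : X) (y : Y) : BddBelow (NsqSet P x y) := by
  refine ⟨0, ?_⟩
  rintro _ ⟨n, p, Pe, hp, -, hPe, -, rfl⟩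
  exact Finset.sum_nonneg fun i _ => mul_nonneg (hp i) ((hPe i).mutInfo_nonneg x y)

lemma IsDevice.mutInfo_mem_NsqSet (hP : IsDevice P) (x : X) (y : Y) :
    mutInfo (fun a b => P a b x y) ∈ NsqSet P x y :=
  ⟨1, fun _ => 1, fun _ => P, by simp, by simp, fun _ => hP, by simp, by simp⟩

lemma IsDevice.sInf_NsqSet_le_mutInfo (hP : IsDevice P) (x : X) (y : Y) :
    sInf (NsqSet P x y) ≤ mutInfo fun a b => P a b x y :=
  csInf_le (bddBelow_NsqSet P x y) (hP.mutInfo_mem_NsqSet x y)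

end SquashedNonlocality

/-- Subextensivity: the squashed non-locality of a bipartite non-signaling device is at
most `log₂(min(|A|, |B|))`. -/
theorem Nsq_subextensive {A B X Y : Type} [Fintype A] [Fintype B] [Fintype X] [Fintype Y]
    [Nonempty X] [Nonempty Y]
    (P : A → B → X → Y → ℝ) (hP : IsDevice P) :
    Nsq P ≤ Real.logb 2 ((min (Fintype.card A) (Fintype.card B) : ℕ) : ℝ) := by
  refine Finset.sup'_le _ _ fun ⟨x, y⟩ _ => ?_
  calc sInf (NsqSet P x y) ≤ mutInfo fun a b => P a b x y := hP.sInf_NsqSet_le_mutInfo x y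
    _ ≤ Real.logb 2 ((min (Fintype.card A) (Fintype.card B) : ℕ) : ℝ) :=
        hP.mutInfo_le_logb_min_card x y
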